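/- Let ι be a finite type, η > 0, U a positive integer, and let C be a convex set of functions q : ι → ℝ such that every q ∈ C satisfies q i > 0 for all i. Let l̂_1,…,l̂_U : ι → ℝ be nonnegative, and let q̂_1,…,q̂_{U+1} : ι → ℝ satisfy: q̂_u i > 0 for all u and i; for each u ∈ {1,…,U}, setting q̃_{u+1} i = q̂_u i · exp(−η · l̂_u i), the vector q̂_{u+1} belongs to C and minimizes D(·‖q̃_{u+1}) over C (i.e., D(q̂_{u+1}‖q̃_{u+1}) ≤ D(p‖q̃_{u+1}) for all p ∈ C). Then for every q ∈ C, ∑_{u=1}^{U} ∑_i (q̃_{u+1} i − q i) · l̂_u i ≤ D(q‖q̂_1) / η. -/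

import Mathlib

/-- The unnormalized relative entropy
`D(q‖q') = ∑ i, q i * log (q i / q' i) - ∑ i, (q i - q' i)`. -/
noncomputable def unnormalizedRelEnt {ι : Type*} [Fintype ι] (q q' : ι → ℝ) : ℝ :=
  ∑ i, q i * Real.log (q i / q' i) - ∑ i, (q i - q' i)

/-!
With `q̃` the exponential update of `q̂_u` by the loss `l`, the gradient of `D(·‖q̂_u)` at `q̃` is
`log (q̃ / q̂_u) = -η l`, so the three-point identity reads
`η ⟨q̃ - q, l⟩ = D(q‖q̂_u) - D(q‖q̃) - D(q̃‖q̂_u)`. The last term has a favourable sign, and the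
generalized Pythagorean inequality for the projection allows `D(q‖q̃)` to be replaced by
`D(q‖q̂_{u+1})`. What remains telescopes over `u`.
-/

section RelativeEntropy

open Real InformationTheory

variable {ι : Type*} [Fintype ι] {p q r : ι → ℝ}

theorem unnormalizedRelEnt_eq_sum_mul_klFun (hr : ∀ i, r i ≠ 0) :
    unnormalizedRelEnt q r = ∑ i, r i * klFun (q i / r i) := by
  rw [unnormalizedRelEnt, ← Finset.sum_sub_distrib]
  refine Finset.sum_congr rfl fun i _ => ?_
  have := hr i
  rw [klFun_apply]
  field_simp
  ring

theorem unnormalizedRelEnt_nonneg (hq : ∀ i, 0 ≤ q i) (hr : ∀ i, 0 < r i) :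
    0 ≤ unnormalizedRelEnt q r := by
  rw [unnormalizedRelEnt_eq_sum_mul_klFun fun i => (hr i).ne']
  exact Finset.sum_nonneg fun i _ =>
    mul_nonneg (hr i).le (klFun_nonneg (div_nonneg (hq i) (hr i).le))

theorem unnormalizedRelEnt_three_point (hp : ∀ i, p i ≠ 0) (hr : ∀ i, r i ≠ 0) :
    unnormalizedRelEnt q r = unnormalizedRelEnt q p + unnormalizedRelEnt p r
      + ∑ i, (q i - p i) * log (p i / r i) := by
  have mul_log_div (i : ι) :
      q i * log (q i / r i) = q i * log (q i / p i) + q i * log (p i / r i) := by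
    rcases eq_or_ne (q i) 0 with hqi | hqi
    · simp [hqi]
    · rw [log_div hqi (hr i), log_div hqi (hp i), log_div (hp i) (hr i)]
      ring
  simp only [unnormalizedRelEnt, ← Finset.sum_sub_distrib, ← Finset.sum_add_distrib]
  refine Finset.sum_congr rfl fun i _ => ?_
  rw [mul_log_div]
  ring

theorem hasFDerivAt_unnormalizedRelEnt_left (hp : ∀ i, p i ≠ 0) (hr : ∀ i, r i ≠ 0) :
    HasFDerivAt (fun x => unnormalizedRelEnt x r)
      (∑ i, log (p i / r i) • ContinuousLinearMap.proj (R := ℝ) (φ := fun _ : ι => ℝ) i) p := by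
  simp only [unnormalizedRelEnt_eq_sum_mul_klFun hr]
  refine HasFDerivAt.fun_sum fun i _ => ?_
  have coord_deriv : HasDerivAt (fun t => r i * klFun (t / r i)) (log (p i / r i)) (p i) := by
    have scaled_deriv := ((hasDerivAt_klFun (div_ne_zero (hp i) (hr i))).comp (p i)
      ((hasDerivAt_id (p i)).div_const (r i))).const_mul (r i)
    exact scaled_deriv.congr_deriv (by rw [mul_left_comm, mul_one_div_cancel (hr i), mul_one])
  exact HasDerivAt.comp_hasFDerivAt (h₂ := fun t => r i * klFun (t / r i)) p coord_deriv
    (hasFDerivAt_apply i p)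

theorem sum_sub_mul_log_div_nonneg_of_isMinOn {C : Set (ι → ℝ)} (hC : Convex ℝ C)
    (hp : ∀ i, p i ≠ 0) (hr : ∀ i, r i ≠ 0) (hpC : p ∈ C) (hqC : q ∈ C)
    (hmin : IsMinOn (fun x => unnormalizedRelEnt x r) C p) :
    0 ≤ ∑ i, (q i - p i) * log (p i / r i) := by
  have directional_deriv_nonneg := hmin.localize.hasFDerivWithinAt_nonneg
    (hasFDerivAt_unnormalizedRelEnt_left hp hr).hasFDerivWithinAt
    (sub_mem_posTangentConeAt_of_segment_subset (hC.segment_subset hpC hqC))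
  simpa [mul_comm] using directional_deriv_nonneg

theorem unnormalizedRelEnt_pythagorean {C : Set (ι → ℝ)} (hC : Convex ℝ C)
    (hp : ∀ i, p i ≠ 0) (hr : ∀ i, r i ≠ 0) (hpC : p ∈ C) (hqC : q ∈ C)
    (hmin : IsMinOn (fun x => unnormalizedRelEnt x r) C p) :
    unnormalizedRelEnt q p + unnormalizedRelEnt p r ≤ unnormalizedRelEnt q r := by
  rw [unnormalizedRelEnt_three_point (q := q) hp hr]
  exact le_add_of_nonneg_right (sum_sub_mul_log_div_nonneg_of_isMinOn hC hp hr hpC hqC hmin)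

end RelativeEntropy

section MirrorDescent

variable {ι : Type*}

/-- The unconstrained mirror-descent step `q̃` from `a` with step size `η` and loss `l`, for the
negative-entropy mirror map. -/
noncomputable def exponentialUpdate (η : ℝ) (l a : ι → ℝ) : ι → ℝ :=
  fun i => a i * Real.exp (-η * l i)

theorem exponentialUpdate_pos (η : ℝ) (l : ι → ℝ) {a : ι → ℝ} (ha : ∀ i, 0 < a i) (i : ι) :
    0 < exponentialUpdate η l a i :=
  mul_pos (ha i) (Real.exp_pos _)

theorem log_exponentialUpdate_div (η : ℝ) (l : ι → ℝ) {a : ι → ℝ} {i : ι} (ha : a i ≠ 0) :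
    Real.log (exponentialUpdate η l a i / a i) = -η * l i := by
  rw [exponentialUpdate, mul_div_cancel_left₀ _ ha, Real.log_exp]

variable [Fintype ι]

theorem mul_sum_exponentialUpdate_sub_mul (η : ℝ) (l q : ι → ℝ) {a : ι → ℝ}
    (ha : ∀ i, a i ≠ 0) :
    η * ∑ i, (exponentialUpdate η l a i - q i) * l i
      = unnormalizedRelEnt q a - unnormalizedRelEnt q (exponentialUpdate η l a)
        - unnormalizedRelEnt (exponentialUpdate η l a) a := by
  have update_ne_zero (i : ι) : exponentialUpdate η l a i ≠ 0 :=
    mul_ne_zero (ha i) (Real.exp_ne_zero _)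
  have gradient_pairing :
      ∑ i, (q i - exponentialUpdate η l a i) * Real.log (exponentialUpdate η l a i / a i)
        = η * ∑ i, (exponentialUpdate η l a i - q i) * l i := by
    rw [Finset.mul_sum]
    refine Finset.sum_congr rfl fun i _ => ?_
    rw [log_exponentialUpdate_div η l (ha i)]
    ring
  rw [unnormalizedRelEnt_three_point (q := q) update_ne_zero ha, gradient_pairing]
  ring

theorem mul_sum_exponentialUpdate_sub_mul_le_of_isMinOn {C : Set (ι → ℝ)} (hC : Convex ℝ C)
    {η : ℝ} {l a p q : ι → ℝ} (ha : ∀ i, 0 < a i) (hp : ∀ i, 0 < p i) (hpC : p ∈ C) (hqC : q ∈ C)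
    (hmin : IsMinOn (fun x => unnormalizedRelEnt x (exponentialUpdate η l a)) C p) :
    η * ∑ i, (exponentialUpdate η l a i - q i) * l i
      ≤ unnormalizedRelEnt q a - unnormalizedRelEnt q p := by
  have update_pos := exponentialUpdate_pos η l ha
  have pythagorean := unnormalizedRelEnt_pythagorean hC (fun i => (hp i).ne')
    (fun i => (update_pos i).ne') hpC hqC hmin
  have update_div_nonneg := unnormalizedRelEnt_nonneg (fun i => (update_pos i).le) ha
  have proj_div_nonneg := unnormalizedRelEnt_nonneg (fun i => (hp i).le) update_pos
  rw [mul_sum_exponentialUpdate_sub_mul η l q fun i => (ha i).ne']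
  linarith

end MirrorDescent

theorem sum_castSucc_sub_succ {M : Type*} [AddCommGroup M] {n : ℕ} (f : Fin (n + 1) → M) :
    ∑ i : Fin n, (f i.castSucc - f i.succ) = f 0 - f (Fin.last n) := by
  rw [Finset.sum_sub_distrib, sub_eq_sub_iff_add_eq_add, ← Fin.sum_univ_castSucc,
    Fin.sum_univ_succ]

theorem omd_telescoped_bound_general
    {ι : Type*} [Fintype ι] {η : ℝ} (hη : 0 < η) {U : ℕ}
    {C : Set (ι → ℝ)} (hCconv : Convex ℝ C) (hCnonneg : ∀ p ∈ C, ∀ i, 0 ≤ p i)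
    (lhat : Fin U → ι → ℝ)
    {qhat : Fin (U + 1) → ι → ℝ} (hqhatpos : ∀ u i, 0 < qhat u i)
    (hmem : ∀ u : Fin U, qhat u.succ ∈ C)
    (hproj : ∀ u : Fin U,
      IsMinOn (fun p => unnormalizedRelEnt p (exponentialUpdate η (lhat u) (qhat u.castSucc)))
        C (qhat u.succ))
    {q : ι → ℝ} (hq : q ∈ C) :
    ∑ u : Fin U, ∑ i, (exponentialUpdate η (lhat u) (qhat u.castSucc) i - q i) * lhat u i
      ≤ unnormalizedRelEnt q (qhat 0) / η := by
  rw [le_div_iff₀' hη, Finset.mul_sum]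
  calc
    _ ≤ ∑ u : Fin U,
        (unnormalizedRelEnt q (qhat u.castSucc) - unnormalizedRelEnt q (qhat u.succ)) :=
      Finset.sum_le_sum fun u _ => mul_sum_exponentialUpdate_sub_mul_le_of_isMinOn hCconv
        (hqhatpos u.castSucc) (hqhatpos u.succ) (hmem u) hq (hproj u)
    _ = unnormalizedRelEnt q (qhat 0) - unnormalizedRelEnt q (qhat (Fin.last U)) :=
      sum_castSucc_sub_succ fun u => unnormalizedRelEnt q (qhat u)
    _ ≤ unnormalizedRelEnt q (qhat 0) :=
      sub_le_self _ (unnormalizedRelEnt_nonneg (hCnonneg q hq) (hqhatpos (Fin.last U)))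

/-- Telescoped online-mirror-descent bound (equation (25) in Step-2-ii of the
proof of Theorem 3): the exponential updates `q̃_{u+1}` together with their
Bregman projections `q̂_{u+1}` onto the convex set `C` satisfy
`∑_u ⟨q̃_{u+1} - q, l̂_u⟩ ≤ D(q‖q̂_1)/η` for every `q ∈ C`. -/
theorem omd_telescoped_bound
    {ι : Type*} [Fintype ι] (η : ℝ) (hη : 0 < η) (U : ℕ) (hU : 0 < U)
    (C : Set (ι → ℝ)) (hCconv : Convex ℝ C) (hCpos : ∀ p ∈ C, ∀ i, 0 < p i)
    (lhat : Fin U → ι → ℝ) (hlhat : ∀ u i, 0 ≤ lhat u i)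
    (qhat : Fin (U + 1) → ι → ℝ) (hqhatpos : ∀ u i, 0 < qhat u i)
    (hmem : ∀ u : Fin U, qhat u.succ ∈ C)
    (hproj : ∀ u : Fin U, ∀ p ∈ C,
      unnormalizedRelEnt (qhat u.succ)
          (fun i => qhat u.castSucc i * Real.exp (-η * lhat u i))
        ≤ unnormalizedRelEnt p
          (fun i => qhat u.castSucc i * Real.exp (-η * lhat u i)))
    (q : ι → ℝ) (hq : q ∈ C) :
    ∑ u : Fin U, ∑ i, ((qhat u.castSucc i * Real.exp (-η * lhat u i)) - q i) * lhat u i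
      ≤ unnormalizedRelEnt q (qhat 0) / η :=
  omd_telescoped_bound_general hη hCconv (fun p hp i => (hCpos p hp i).le) lhat hqhatpos hmem
    (fun u => isMinOn_iff.2 (hproj u)) hq
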